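/- Let d ≥ 2, let g ∈ GL_d(K̃), and let Λ = gR^d. Then there exist a matrix u with entries in O and |det u| = 1 (i.e. u ∈ GL_d(O)) and a matrix h with entries in R and |det h| = 1 such that u·g·h = diag(x^{m₁},…,x^{m_d}), where m_i ∈ ℤ is defined by q^{m_i} = λ_i(Λ) for i = 1,…,d. In particular uΛ = diag(x^{m₁},…,x^{m_d})R^d. -/

import Mathlib

noncomputable section

open scoped Classical

variable (Fq : Type) [Field Fq] [Fintype Fq]

/-- `K̃ = 𝔽_q((x⁻¹))`, realized as formal Laurent series in `t = x⁻¹`. -/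
abbrev Kt := LaurentSeries Fq

/-- The element `x` of `K̃` (the inverse of the Laurent series variable). -/
def Kx : Kt Fq := HahnSeries.single (-1 : ℤ) 1

/-- Absolute value `|f| = q^{deg f}`, i.e. `q^{-order f}` in terms of `t = x⁻¹`. -/
def Kabs (f : Kt Fq) : ℝ := if f = 0 then 0 else (Fintype.card Fq : ℝ) ^ (-f.order)

/-- The ring embedding of `R = 𝔽_q[x]` into `K̃`. -/
def polyK : Polynomial Fq →+* Kt Fq := (Polynomial.aeval (Kx Fq)).toRingHom

/-- Sup norm on `K̃^d`. -/
def vnorm {d : ℕ} (v : Fin d → Kt Fq) : ℝ := ⨆ i, Kabs Fq (v i)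

/-- The lattice `g·R^d`. -/
def lattice {d : ℕ} (g : Matrix (Fin d) (Fin d) (Kt Fq)) : Set (Fin d → Kt Fq) :=
  {v | ∃ c : Fin d → Polynomial Fq, v = g.mulVec fun j => polyK Fq (c j)}

/-- `i`-th successive minimum of `Λ` with respect to a norm `nrm`: the least `r > 0` such that
`Λ` contains `i` linearly independent vectors of norm at most `r`. -/
def minimaN {d : ℕ} (nrm : (Fin d → Kt Fq) → ℝ) (Λ : Set (Fin d → Kt Fq)) (i : ℕ) : ℝ :=
  sInf {r : ℝ | 0 < r ∧ ∃ v : Fin i → Fin d → Kt Fq,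
    (∀ j, v j ∈ Λ) ∧ LinearIndependent (Kt Fq) v ∧ ∀ j, nrm (v j) ≤ r}

/-- `i`-th successive minimum with respect to the sup norm. -/
def minima {d : ℕ} (Λ : Set (Fin d → Kt Fq)) (i : ℕ) : ℝ := minimaN Fq (vnorm Fq) Λ i

/-- Covering radius of `Λ` with respect to the norm `nrm`. -/
def covRad {d : ℕ} (nrm : (Fin d → Kt Fq) → ℝ) (Λ : Set (Fin d → Kt Fq)) : ℝ :=
  ⨆ w : Fin d → Kt Fq, ⨅ u : Λ, nrm (w - u.1)

/-- Length of the shortest nonzero vector of `Λ`. -/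
def ell {d : ℕ} (Λ : Set (Fin d → Kt Fq)) : ℝ :=
  sInf {r : ℝ | ∃ v ∈ Λ, v ≠ 0 ∧ vnorm Fq v = r}

/-- `Λ` is well rounded: it contains `d` linearly independent vectors of norm `ℓ(Λ)`. -/
def IsWellRounded {d : ℕ} (Λ : Set (Fin d → Kt Fq)) : Prop :=
  ∃ v : Fin d → Fin d → Kt Fq, (∀ j, v j ∈ Λ) ∧ LinearIndependent (Kt Fq) v ∧
    ∀ j, vnorm Fq (v j) = ell Fq Λ

/-- The multiplicative "norm" `N(v) = ∏ |v i|`. -/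
def Nprod {d : ℕ} (v : Fin d → Kt Fq) : ℝ := ∏ i, Kabs Fq (v i)

/-- The Minkowski function `μ(Λ) = sup_w inf_{u ∈ Λ} N(w - u)`. -/
def mink {d : ℕ} (Λ : Set (Fin d → Kt Fq)) : ℝ :=
  ⨆ w : Fin d → Kt Fq, ⨅ u : Λ, Nprod Fq (w - u.1)


set_option linter.unusedSectionVars false

abbrev iotaK : PowerSeries Fq →+* Kt Fq := HahnSeries.ofPowerSeries ℤ Fq

lemma Kx_zpow (n : ℤ) : Kx Fq ^ n = HahnSeries.single (-n) 1 := by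
  unfold Kx
  have h1 : (HahnSeries.single (-1 : ℤ) (1 : Fq)) = (HahnSeries.single (1 : ℤ) (1 : Fq))⁻¹ := by
    apply eq_inv_of_mul_eq_one_left
    simp [HahnSeries.single_mul_single]
  rw [h1, inv_zpow', RatFunc.single_zpow (-n)]

lemma Kx_ne : Kx Fq ≠ 0 := by
  unfold Kx; simp

lemma iota_X : iotaK Fq PowerSeries.X = Kx Fq ^ (-1 : ℤ) := by
  rw [Kx_zpow]; simp [HahnSeries.ofPowerSeries_X]

lemma iota_C (a : Fq) : iotaK Fq (PowerSeries.C a) = polyK Fq (Polynomial.C a) := by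
  have h : polyK Fq (Polynomial.C a) = algebraMap Fq (Kt Fq) a := Polynomial.aeval_C _ _
  rw [h]
  rfl

lemma polyK_X : polyK Fq Polynomial.X = Kx Fq := by simp [polyK]

lemma card_gt : (1 : ℝ) < Fintype.card Fq := by exact_mod_cast Fintype.one_lt_card

lemma Kabs_zero : Kabs Fq 0 = 0 := by simp [Kabs]

lemma Kabs_nonneg (f : Kt Fq) : 0 ≤ Kabs Fq f := by
  unfold Kabs; split_ifs <;> positivity

lemma Kabs_mul (f g : Kt Fq) : Kabs Fq (f * g) = Kabs Fq f * Kabs Fq g := by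
  have := card_gt Fq
  by_cases hf : f = 0
  · simp [hf, Kabs]
  by_cases hg : g = 0
  · simp [hg, Kabs]
  simp only [Kabs, hf, hg, mul_eq_zero, or_self, if_false]
  rw [HahnSeries.order_mul hf hg, neg_add, zpow_add₀ (by positivity)]

lemma Kabs_add (f g : Kt Fq) : Kabs Fq (f + g) ≤ max (Kabs Fq f) (Kabs Fq g) := by
  have := card_gt Fq
  by_cases hf : f = 0
  · simp [hf]
  by_cases hg : g = 0
  · simp [hg]
  by_cases hfg : f + g = 0
  · rw [hfg, Kabs_zero]; exact le_max_of_le_left (Kabs_nonneg _ _)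
  have h := HahnSeries.min_order_le_order_add hfg
  simp only [Kabs, hf, hg, hfg, if_false]
  rcases min_le_iff.1 h with h | h
  · exact le_max_of_le_left (zpow_le_zpow_right₀ this.le (by omega))
  · exact le_max_of_le_right (zpow_le_zpow_right₀ this.le (by omega))

lemma Kabs_sum {ι : Type*} (s : Finset ι) (f : ι → Kt Fq) (r : ℝ) (hr : 0 ≤ r)
    (h : ∀ i ∈ s, Kabs Fq (f i) ≤ r) : Kabs Fq (∑ i ∈ s, f i) ≤ r := by
  classical
  induction s using Finset.induction_on with
  | empty => simpa [Kabs_zero] using hr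
  | insert a s ha ih =>
    rw [Finset.sum_insert ha]
    exact (Kabs_add _ _ _).trans (max_le (h _ (by simp)) (ih fun i hi => h i (by simp [hi])))

lemma Kabs_iota (p : PowerSeries Fq) : Kabs Fq (iotaK Fq p) ≤ 1 := by
  unfold Kabs
  split_ifs with h
  · norm_num
  · apply zpow_le_one_of_nonpos₀ (card_gt Fq).le
    rw [neg_nonpos]
    by_contra! hlt
    have h2 := HahnSeries.coeff_order_eq_zero.not.2 h
    apply h2
    rw [HahnSeries.ofPowerSeries_apply]
    apply HahnSeries.embDomain_of_notMem_range
    rintro ⟨n, hn⟩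
    have h3 : (n : ℤ) = (iotaK Fq p).order := hn
    rw [← h3] at hlt
    omega

lemma Kabs_one : Kabs Fq 1 = 1 := by simp [Kabs]

lemma Kabs_iota_unit (p : PowerSeries Fq) (hp : IsUnit p) : Kabs Fq (iotaK Fq p) = 1 := by
  obtain ⟨u, rfl⟩ := hp
  apply le_antisymm (Kabs_iota _ _)
  have h1 := Kabs_iota Fq (↑u⁻¹ : PowerSeries Fq)
  have h2 : Kabs Fq (iotaK Fq u) * Kabs Fq (iotaK Fq (↑u⁻¹ : PowerSeries Fq)) = 1 := by
    rw [← Kabs_mul, ← map_mul]; simp [Kabs_one]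
  nlinarith [Kabs_nonneg Fq (iotaK Fq u)]

lemma Kabs_Kx (n : ℤ) : Kabs Fq (Kx Fq ^ n) = (Fintype.card Fq : ℝ) ^ n := by
  rw [Kx_zpow]; simp [Kabs]

lemma Kabs_poly_unit (p : Polynomial Fq) (hp : IsUnit p) : Kabs Fq (polyK Fq p) = 1 := by
  obtain ⟨a, ha, rfl⟩ := Polynomial.isUnit_iff.1 hp
  rw [← iota_C]
  exact Kabs_iota_unit _ _ (ha.map _)

lemma polyK_coeff (p : Polynomial Fq) (k : ℕ) : (polyK Fq p).coeff (-(k : ℤ)) = p.coeff k := by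
  have : polyK Fq p = ∑ n ∈ p.support, HahnSeries.single (-(n : ℤ)) (p.coeff n) := by
    conv_lhs => rw [p.as_sum_support_C_mul_X_pow]
    rw [map_sum]
    refine Finset.sum_congr rfl fun n _ => ?_
    rw [map_mul, map_pow, polyK_X, ← iota_C, ← zpow_natCast, Kx_zpow]
    simp [HahnSeries.ofPowerSeries_C]
  rw [this, HahnSeries.coeff_sum]
  simp only [HahnSeries.coeff_single, neg_inj, Nat.cast_inj]
  simp [eq_comm]

lemma Kabs_poly (p : Polynomial Fq) (hp : p ≠ 0) : 1 ≤ Kabs Fq (polyK Fq p) := by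
  have hc : (polyK Fq p).coeff (-(p.natDegree : ℤ)) ≠ 0 := by
    rw [polyK_coeff]; simpa using hp
  have h0 : polyK Fq p ≠ 0 := by rintro h; simp [h] at hc
  have := HahnSeries.order_le_of_coeff_ne_zero hc
  simp only [Kabs, h0, if_false]
  exact one_le_zpow₀ (card_gt Fq).le (by omega)

lemma exists_iota (f : Kt Fq) : ∃ N : ℤ, ∀ M ≥ N, ∃ p, f = iotaK Fq p * Kx Fq ^ M := by
  refine ⟨-f.order, fun M hM => ?_⟩
  obtain ⟨k, hk⟩ := Int.eq_ofNat_of_zero_le (show 0 ≤ f.order + M by omega)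
  refine ⟨f.powerSeriesPart * PowerSeries.X ^ k, ?_⟩
  rw [map_mul, map_pow, iota_X, mul_assoc, ← zpow_natCast, ← zpow_mul, ← zpow_add₀ (Kx_ne Fq)]
  rw [iotaK, LaurentSeries.ofPowerSeries_powerSeriesPart, Kx_zpow, mul_right_comm,
    HahnSeries.single_mul_single]
  have : -f.order + -(-1 * (k:ℤ) + M) = 0 := by omega
  rw [this]; simp

lemma exists_start {d : ℕ} (g : Matrix (Fin d) (Fin d) (Kt Fq)) :
    ∃ (W : Matrix (Fin d) (Fin d) (PowerSeries Fq)) (n : Fin d → ℤ),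
      g = W.map (iotaK Fq) * Matrix.diagonal (fun i => Kx Fq ^ n i) := by
  choose N hN using fun ij : Fin d × Fin d => exists_iota Fq (g ij.1 ij.2)
  obtain ⟨M, hM⟩ := Finset.exists_le (Finset.univ.image N)
  choose p hp using fun ij => hN ij M (hM _ (by simp))
  refine ⟨Matrix.of fun i j => p (i, j), fun _ => M, ?_⟩
  ext1 i j
  rw [Matrix.mul_diagonal]
  exact hp (i, j)

/-- Reduction data. -/
def Red {d : ℕ} (g : Matrix (Fin d) (Fin d) (Kt Fq)) (h : Matrix (Fin d) (Fin d) (Polynomial Fq))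
    (W : Matrix (Fin d) (Fin d) (PowerSeries Fq)) (n : Fin d → ℤ) : Prop :=
  IsUnit h.det ∧ g * h.map (polyK Fq) = W.map (iotaK Fq) * Matrix.diagonal (fun i => Kx Fq ^ n i)

lemma red_bound {d : ℕ} {g : Matrix (Fin d) (Fin d) (Kt Fq)} {h W n} (H : Red Fq g h W n)
    (hg : g.det ≠ 0) : - g.det.order ≤ ∑ i, n i := by
  have h1 := congrArg (fun A => Kabs Fq (Matrix.det A)) H.2
  simp only [Matrix.det_mul, Kabs_mul, Matrix.det_diagonal] at h1
  have e1 : (h.map (polyK Fq)).det = polyK Fq h.det := by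
    rw [RingHom.map_det]; rfl
  have e2 : (W.map (iotaK Fq)).det = iotaK Fq W.det := by
    rw [RingHom.map_det]; rfl
  have e3 : ∏ i, Kx Fq ^ n i = Kx Fq ^ ∑ i, n i := by
    induction (Finset.univ : Finset (Fin d)) using Finset.induction_on with
    | empty => simp
    | insert a s ha ih => rw [Finset.prod_insert ha, Finset.sum_insert ha, ih, zpow_add₀ (Kx_ne Fq)]
  rw [e1, e2, e3, Kabs_poly_unit _ _ H.1, Kabs_Kx, mul_one] at h1
  have h2 := Kabs_iota Fq W.det
  have h3 : Kabs Fq g.det ≤ (Fintype.card Fq : ℝ) ^ ∑ i, n i := by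
    rw [h1]; exact mul_le_of_le_one_left (by positivity) h2
  simp only [Kabs, hg, if_false] at h3
  exact (zpow_le_zpow_iff_right₀ (card_gt Fq)).1 h3

lemma red_step {d : ℕ} {g : Matrix (Fin d) (Fin d) (Kt Fq)} {h W n} (H : Red Fq g h W n)
    (hW : ¬ IsUnit W.det) : ∃ h' W' n', Red Fq g h' W' n' ∧ ∑ i, n' i < ∑ i, n i := by
  set W0 : Matrix (Fin d) (Fin d) Fq := W.map (PowerSeries.constantCoeff) with hW0
  have hdet : W0.det = 0 := by
    have : W0.det = PowerSeries.constantCoeff W.det := by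
      rw [RingHom.map_det]; rfl
    rw [this]
    rw [PowerSeries.isUnit_iff_constantCoeff] at hW
    simpa using hW
  obtain ⟨c, hc0, hc⟩ := Matrix.exists_mulVec_eq_zero_iff.2 hdet
  obtain ⟨j1, hj1⟩ := Function.ne_iff.1 hc0
  obtain ⟨j0, hj0, hmax⟩ := Finset.exists_max_image (Finset.univ.filter fun j => c j ≠ 0) n
    ⟨j1, by simpa using hj1⟩
  simp only [Finset.mem_filter, Finset.mem_univ, true_and] at hj0 hmax
  have hdvd : ∀ i, ∃ q, ∑ j, W i j * PowerSeries.C (c j) = PowerSeries.X * q := by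
    intro i
    have : PowerSeries.X ∣ ∑ j, W i j * PowerSeries.C (c j) := by
      rw [PowerSeries.X_dvd_iff, map_sum]
      have := congrFun hc i
      simpa [Matrix.mulVec, dotProduct, hW0] using this
    exact this
  choose q hq using hdvd
  let v : Fin d → Polynomial Fq := fun j => Polynomial.C (c j) * Polynomial.X ^ (n j0 - n j).toNat
  have hv : ∀ j, Kx Fq ^ n j * polyK Fq (v j) = iotaK Fq (PowerSeries.C (c j)) * Kx Fq ^ n j0 := by
    intro j
    simp only [v, map_mul, map_pow, polyK_X, iota_C]
    by_cases hcj : c j = 0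
    · simp [hcj]
    · have := hmax j hcj
      rw [← zpow_natCast, Int.toNat_of_nonneg (by omega), mul_left_comm, ← zpow_add₀ (Kx_ne Fq)]
      congr 2; omega
  refine ⟨h * (1 : Matrix (Fin d) (Fin d) _).updateCol j0 v, W.updateCol j0 q,
    Function.update n j0 (n j0 - 1), ⟨?_, ?_⟩, ?_⟩
  · rw [Matrix.det_mul]
    refine H.1.mul ?_
    rw [← Matrix.cramer_apply, Matrix.cramer_one]
    simp only [v, sub_self, Int.toNat_zero, pow_zero, mul_one, Module.End.one_apply]
    exact (Ne.isUnit hj0).map Polynomial.C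
  · rw [Matrix.map_mul, ← mul_assoc, H.2]
    ext1 i j
    rw [Matrix.mul_diagonal, Matrix.mul_apply]
    simp only [Matrix.mul_diagonal, Matrix.map_apply]
    by_cases hj : j = j0
    · subst hj
      simp only [Matrix.updateCol_self, Function.update_self, mul_assoc, hv]
      have := congrArg (iotaK Fq) (hq i)
      rw [map_mul, iota_X, map_sum] at this
      simp only [map_mul] at this
      simp only [← mul_assoc]
      rw [← Finset.sum_mul, this, mul_right_comm, ← zpow_add₀ (Kx_ne Fq), mul_comm]
      congr 2; omega
    · simp only [Matrix.updateCol_ne hj, Function.update_of_ne hj, Matrix.one_apply]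
      rw [Finset.sum_eq_single j]
      · simp
      · intro b _ hb; simp [hb]
      · simp
  · apply Finset.sum_lt_sum
    · intro i _
      by_cases hi : i = j0
      · subst hi; simp
      · simp [hi]
    · exact ⟨j0, by simp, by simp⟩

lemma red_exists {d : ℕ} (g : Matrix (Fin d) (Fin d) (Kt Fq)) (hg : g.det ≠ 0) :
    ∃ h W n, Red Fq g h W n ∧ IsUnit W.det ∧ Monotone n := by
  obtain ⟨s, ⟨h, W, n, H, hs⟩, hmin⟩ := Int.exists_least_of_bdd
    (P := fun s => ∃ h W n, Red Fq g h W n ∧ ∑ i, n i = s)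
    ⟨_, fun z ⟨h, W, n, H, hz⟩ => hz ▸ red_bound Fq H hg⟩ (by
      obtain ⟨W, n, h⟩ := exists_start Fq g
      refine ⟨_, 1, W, n, ⟨by simp, ?_⟩, rfl⟩
      rw [← h]; simp)
  have hW : IsUnit W.det := by
    by_contra hW
    obtain ⟨h', W', n', H', hlt⟩ := red_step Fq H hW
    have := hmin _ ⟨h', W', n', H', rfl⟩
    omega
  set σ := Tuple.sort n
  have hsig : ∀ {S : Type} [CommRing S], IsUnit (((Equiv.Perm.sign σ : ℤˣ) : ℤ) : S) := fun {S} _ =>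
    ((Equiv.Perm.sign σ).isUnit).map (Int.castRingHom S)
  refine ⟨h.submatrix id σ, W.submatrix id σ, n ∘ σ, ⟨?_, ?_⟩, ?_, Tuple.monotone_sort n⟩
  · rw [Matrix.det_permute']
    exact hsig.mul H.1
  · ext1 i j
    have := congrFun (congrFun H.2 i) (σ j)
    rw [Matrix.mul_diagonal] at this ⊢
    exact this
  · rw [Matrix.det_permute']
    exact hsig.mul hW

lemma vnorm_le {d : ℕ} [NeZero d] (v : Fin d → Kt Fq) (r : ℝ) :
    vnorm Fq v ≤ r ↔ ∀ i, Kabs Fq (v i) ≤ r := by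
  unfold vnorm
  exact ciSup_le_iff (Set.finite_range _).bddAbove

theorem ugh_diagonal_form {d : ℕ} (hd : 2 ≤ d)
    (g : Matrix (Fin d) (Fin d) (Kt Fq)) (hg : g.det ≠ 0) :
    ∃ (u : Matrix (Fin d) (Fin d) (Kt Fq)) (h₀ : Matrix (Fin d) (Fin d) (Polynomial Fq))
      (m : Fin d → ℤ),
      (∀ i j, Kabs Fq (u i j) ≤ 1) ∧ Kabs Fq u.det = 1 ∧
      Kabs Fq (h₀.map (polyK Fq)).det = 1 ∧
      (∀ i : Fin d, (Fintype.card Fq : ℝ) ^ m i = minima Fq (lattice Fq g) ((i : ℕ) + 1)) ∧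
      u * g * h₀.map (polyK Fq) = Matrix.diagonal (fun i => Kx Fq ^ m i) ∧
      lattice Fq (u * g) = lattice Fq (Matrix.diagonal (fun i => Kx Fq ^ m i)) := by
  have : NeZero d := ⟨by omega⟩
  obtain ⟨h, W, m, ⟨hh, H⟩, hW, hm⟩ := red_exists Fq g hg
  have hWW : W⁻¹ * W = 1 := Matrix.nonsing_inv_mul _ hW
  have hhh : h * h⁻¹ = 1 := Matrix.mul_nonsing_inv _ hh
  set D : Matrix (Fin d) (Fin d) (Kt Fq) := Matrix.diagonal (fun i => Kx Fq ^ m i) with hD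
  set u : Matrix (Fin d) (Fin d) (Kt Fq) := W⁻¹.map (iotaK Fq) with hu
  have huW : u * W.map (iotaK Fq) = 1 := by
    rw [hu, ← Matrix.map_mul, hWW]; simp
  have hHH : h.map (polyK Fq) * h⁻¹.map (polyK Fq) = 1 := by
    rw [← Matrix.map_mul, hhh]; simp
  have hugh : u * g * h.map (polyK Fq) = D := by
    rw [mul_assoc, H, ← mul_assoc, huW, one_mul]
  have hug : u * g = D * h⁻¹.map (polyK Fq) := by
    rw [← hugh, mul_assoc, hHH, mul_one]
  have hu1 : ∀ i j, Kabs Fq (u i j) ≤ 1 := fun i j => Kabs_iota _ _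
  have hdetu : u.det = iotaK Fq (W⁻¹).det := by rw [RingHom.map_det]; rfl
  have hdeth : (h.map (polyK Fq)).det = polyK Fq h.det := by rw [RingHom.map_det]; rfl
  have hWinv : IsUnit (W⁻¹).det := by
    rw [Matrix.isUnit_nonsing_inv_det_iff]; exact hW
  have hmap : ∀ (A : Matrix (Fin d) (Fin d) (Polynomial Fq)) (c : Fin d → Polynomial Fq),
      (A.map (polyK Fq)).mulVec (fun j => polyK Fq (c j)) = fun j => polyK Fq (A.mulVec c j) := by
    intro A c
    ext1 i
    simp [Matrix.mulVec, dotProduct]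
  have hudet0 : Kabs Fq u.det = 1 := by rw [hdetu]; exact Kabs_iota_unit _ _ hWinv
  have huu : IsUnit u.det := by
    rw [isUnit_iff_ne_zero]; intro h0; rw [h0, Kabs_zero] at hudet0; norm_num at hudet0
  refine ⟨u, h, m, hu1, hudet0, ?_, ?_, hugh, ?_⟩
  · rw [hdeth]; exact Kabs_poly_unit _ _ hh
  · intro i
    symm
    refine IsLeast.csInf_eq ⟨⟨by have := card_gt Fq; positivity, ?_⟩, ?_⟩
    · have hi : (i : ℕ) + 1 ≤ d := i.2
      refine ⟨fun j => (g * h.map (polyK Fq)).col (Fin.castLE hi j), ?_, ?_, ?_⟩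
      · intro j
        refine ⟨fun k => h k (Fin.castLE hi j), ?_⟩
        ext1 k
        rfl
      · have hgh : IsUnit (g * h.map (polyK Fq)) := by
          rw [Matrix.isUnit_iff_isUnit_det, Matrix.det_mul, hdeth]
          exact (Ne.isUnit hg).mul (hh.map _)
        exact (Matrix.linearIndependent_cols_iff_isUnit.2 hgh).comp _ (Fin.castLE_injective hi)
      · intro j
        rw [vnorm_le]
        intro k
        rw [H]
        change Kabs Fq ((W.map (iotaK Fq) * D) k (Fin.castLE hi j)) ≤ _
        rw [Matrix.mul_diagonal, Kabs_mul, Kabs_Kx]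
        refine (mul_le_of_le_one_left (by positivity) (Kabs_iota _ _)).trans ?_
        refine zpow_le_zpow_right₀ (card_gt Fq).le (hm ?_)
        rw [Fin.le_def]; simp; omega
    · rintro r ⟨hr, v, hv, hli, hvr⟩
      by_contra! hlt
      choose c hc using hv
      have hy : ∀ j k, i ≤ k → (u.mulVec (v j)) k = 0 := by
        intro j k hik
        have h1 : Kabs Fq ((u.mulVec (v j)) k) ≤ r := by
          refine Kabs_sum Fq Finset.univ (fun l => u k l * v j l) _ hr.le fun l _ => ?_
          rw [Kabs_mul]
          have := (vnorm_le Fq _ _).1 (hvr j) l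
          nlinarith [hu1 k l, Kabs_nonneg Fq (u k l), Kabs_nonneg Fq (v j l)]
        have h2 : (u.mulVec (v j)) k = Kx Fq ^ m k * polyK Fq ((h⁻¹).mulVec (c j) k) := by
          rw [hc, Matrix.mulVec_mulVec, hug, ← Matrix.mulVec_mulVec, hmap, hD,
            Matrix.mulVec_diagonal]
        by_cases h0 : (h⁻¹).mulVec (c j) k = 0
        · rw [h2, h0]; simp
        · have h3 := Kabs_poly Fq _ h0
          rw [h2, Kabs_mul, Kabs_Kx] at h1
          have h4 : (Fintype.card Fq : ℝ) ^ m i ≤ (Fintype.card Fq : ℝ) ^ m k :=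
            zpow_le_zpow_right₀ (card_gt Fq).le (hm hik)
          have h5 : (0 : ℝ) < (Fintype.card Fq : ℝ) ^ m k := by have := card_gt Fq; positivity
          nlinarith
      have hz : LinearIndependent (Kt Fq) (fun (j : Fin ((i : ℕ) + 1)) (k : Fin (i : ℕ)) =>
          u.mulVec (v j) (Fin.castLE i.2.le k)) := by
        rw [Fintype.linearIndependent_iff]
        intro a ha
        apply Fintype.linearIndependent_iff.1 hli
        apply Matrix.mulVec_injective_of_isUnit ((Matrix.isUnit_iff_isUnit_det _).2 huu)
        rw [Matrix.mulVec_zero, Matrix.mulVec_sum]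
        ext1 k
        simp only [Matrix.mulVec_smul, Finset.sum_apply, Pi.smul_apply, Pi.zero_apply]
        by_cases hk : i ≤ k
        · exact Finset.sum_eq_zero fun j _ => by rw [hy j k hk, smul_zero]
        · have := congrFun ha ⟨k, by simpa using hk⟩
          simpa using this
      have := hz.fintype_card_le_finrank
      simp at this
  · ext w
    constructor
    · rintro ⟨c, rfl⟩
      refine ⟨(h⁻¹).mulVec c, ?_⟩
      rw [hug, ← Matrix.mulVec_mulVec, hmap]
    · rintro ⟨c, rfl⟩
      refine ⟨h.mulVec c, ?_⟩
      rw [← hD, ← hugh, ← Matrix.mulVec_mulVec, hmap]
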